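/- Let k > 0, and let c_{m,n} be the (m,n)-Fourier coefficient of the smooth section θ_{b/k}(kx+u,kτ)·conj(θ_{a/k}(kx+v,kτ))·exp(-2πt(kx₂² + 2x₂v₂)) of L(0, u-v) with respect to the orthonormal basis φ_{u-v,m,n}(x) = exp(2πi(mx₁ + (n-(u-v))x₂)). Then c_{m,n} = 0 unless m ≡ b - a mod k, and in that case c_{m,n} = (2tk)^{-1/2} exp( -(π/(2tk))(|γ|² + 2·conj(γ)·u - 2γ·conj(v) + (u - conj(v))²) + (πin/k)(m+2a) ), where γ = mτ - n. -/

import Mathlib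

open Complex Real MeasureTheory

/-- The theta function with characteristic `r ∈ ℚ`. -/
noncomputable def theta (r : ℚ) (z σ : ℂ) : ℂ :=
  ∑' n : ℤ, Complex.exp ((π : ℂ) * I * σ * ((n : ℂ) + (r : ℂ)) ^ 2
    + 2 * (π : ℂ) * I * ((n : ℂ) + (r : ℂ)) * z)

lemma aux_inner {ι : Type*} [Countable ι] (F : ι → ℂ) (hF : Summable F) (d : ι → ℤ) :
    ∫ x in Set.Icc (0:ℝ) 1, ∑' i, F i * Complex.exp (2 * (π:ℂ) * I * (d i : ℂ) * (x:ℂ))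
      = ∑' i, if d i = 0 then F i else 0 := by
  have hn : ∀ i (x : ℝ), ‖F i * Complex.exp (2 * (π:ℂ) * I * (d i : ℂ) * (x:ℂ))‖ = ‖F i‖ := by
    intro i x
    have : (2 * (π:ℂ) * I * (d i : ℂ) * (x:ℂ)) = ((2 * π * d i * x : ℝ) : ℂ) * I := by
      push_cast; ring
    rw [norm_mul, this, Complex.norm_exp_ofReal_mul_I, mul_one]
  rw [← integral_tsum_of_summable_integral_norm]
  · congr 1; ext i
    rw [integral_Icc_eq_integral_Ioc, ← intervalIntegral.integral_of_le zero_le_one,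
      intervalIntegral.integral_const_mul]
    split_ifs with h
    · simp [h]
    · rw [integral_exp_mul_complex]
      · have : (2 * (π:ℂ) * I * (d i : ℂ) * ((1:ℝ):ℂ)) = (d i : ℂ) * (2 * π * I) := by
          push_cast; ring
        rw [this, Complex.exp_int_mul_two_pi_mul_I]
        simp
      · simp [h, Real.pi_ne_zero]
  · intro i
    apply Continuous.integrableOn_Icc
    fun_prop
  · simp_rw [hn]
    simpa using hF.norm

lemma aux_outer (f : ℝ → ℂ) (hf : Integrable f) (s : ℝ) :
    ∫ x in Set.Icc (0:ℝ) 1, ∑' i : ℤ, f (x + i + s) = ∫ x, f x := by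
  have hf' : Integrable (fun x => f (x + s)) := hf.comp_add_right s
  rw [← integral_add_right_eq_self f s]
  have h1 := hf'.hasSum_intervalIntegral_comp_add_int
  have h2 := hf'.norm.hasSum_intervalIntegral_comp_add_int
  rw [← h1.tsum_eq, ← integral_tsum_of_summable_integral_norm]
  · congr 1; ext i
    rw [integral_Icc_eq_integral_Ioc, ← intervalIntegral.integral_of_le zero_le_one]
  · intro i
    exact (hf'.comp_add_right (i:ℝ)).integrableOn
  · refine h2.summable.congr fun i => ?_
    rw [integral_Icc_eq_integral_Ioc, ← intervalIntegral.integral_of_le zero_le_one]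

lemma aux_summable (r z σ : ℂ) (hσ : 0 < σ.im) :
    Summable (fun n : ℤ => Complex.exp ((π : ℂ) * I * σ * ((n : ℂ) + r) ^ 2
    + 2 * (π : ℂ) * I * ((n : ℂ) + r) * z)) := by
  have := ((summable_jacobiTheta₂_term_iff (z + σ * r) σ).2 hσ).mul_left
    (Complex.exp (π * I * σ * r ^ 2 + 2 * π * I * r * z))
  refine this.congr fun n => ?_
  rw [jacobiTheta₂_term, ← Complex.exp_add]
  congr 1
  ring

/-- theta term -/
noncomputable def th (r z σ : ℂ) (n : ℤ) : ℂ := Complex.exp ((π : ℂ) * I * σ * ((n : ℂ) + r) ^ 2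
    + 2 * (π : ℂ) * I * ((n : ℂ) + r) * z)

lemma aux_prod (τ : ℂ) (htpos : 0 < τ.im)
    (k : ℕ) (hk : 0 < k) (a b m : ℤ) (z w c : ℂ) :
    (∫ x₁ in Set.Icc (0:ℝ) 1,
      theta ((b : ℚ)/k) ((k : ℂ) * (x₁ : ℂ) + z) ((k : ℂ) * τ) *
      (starRingEnd ℂ) (theta ((a : ℚ)/k) ((k : ℂ) * (x₁ : ℂ) + w) ((k : ℂ) * τ)) *
      (c * Complex.exp (-(2 * (π : ℂ) * I * ((m : ℂ) * (x₁ : ℂ)))))) =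
    ∑' p : ℤ × ℤ, if ((k:ℤ) * p.1 + b - (k * p.2 + a) - m) = 0 then 
      th (b/k) z (k * τ) p.1 * (starRingEnd ℂ) (th (a/k) w (k * τ) p.2) * c else 0 := by
  have hk0 : (k:ℂ) ≠ 0 := by exact_mod_cast hk.ne'
  have him : 0 < ((k:ℂ) * τ).im := by
    have : (0:ℝ) < k := by exact_mod_cast hk
    simpa using mul_pos this htpos
  have hs1 (r z : ℂ) : Summable (fun j => ‖th r z (k*τ) j‖) := (aux_summable r z _ him).norm
  have hs2 (r z : ℂ) : Summable (fun j => ‖(starRingEnd ℂ) (th r z (k*τ) j)‖) := by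
    simpa using hs1 r z
  rw [← aux_inner (fun p : ℤ × ℤ => th (b/k) z (k * τ) p.1 * (starRingEnd ℂ) (th (a/k) w (k * τ) p.2) * c)
    ((summable_mul_of_summable_norm (hs1 _ _) (hs2 _ _)).mul_right c)]
  congr 1; ext x
  have e1 : theta ((b : ℚ)/k) ((k : ℂ) * (x : ℂ) + z) ((k : ℂ) * τ) 
    = ∑' j, th (b/k) (k * x + z) (k * τ) j := by simp [theta, th]
  have e2 : theta ((a : ℚ)/k) ((k : ℂ) * (x : ℂ) + w) ((k : ℂ) * τ) 
    = ∑' j, th (a/k) (k * x + w) (k * τ) j := by simp [theta, th]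
  rw [e1, e2, Complex.conj_tsum, tsum_mul_tsum_of_summable_norm (hs1 _ _) (hs2 _ _), ← tsum_mul_right]
  congr 1; ext ⟨j, i⟩
  simp only [th, ← Complex.exp_conj]
  rw [mul_comm c]
  simp only [← mul_assoc, ← Complex.exp_add]
  rw [mul_right_comm _ c, ← Complex.exp_add]
  congr 2
  simp only [map_add, map_mul, map_pow, map_div₀, Complex.conj_I, Complex.conj_ofReal, map_natCast, map_intCast, map_ofNat]
  push_cast
  field_simp
  ring

/-- The Fourier coefficients `c_{m,n}` of the smooth section
`θ_{b/k}(kx+u,kτ)·conj(θ_{a/k}(kx+v,kτ))·exp(-2πt(kx₂²+2x₂v₂))` of `L(0,u-v)`: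
they vanish unless `m ≡ b - a (mod k)`, in which case they are given by an explicit
Gaussian expression with `γ = mτ - n`. -/
theorem stmt_4
    (τ : ℂ) (t : ℝ) (ht : τ.im = t) (htpos : 0 < t)
    (k : ℕ) (hk : 0 < k) (a b m n : ℤ)
    (u v : ℂ) (u₁ u₂ v₁ v₂ : ℝ)
    (hu : u = (u₁ : ℂ) + τ * (u₂ : ℂ)) (hv : v = (v₁ : ℂ) + τ * (v₂ : ℂ)) :
    (∫ x₂ in Set.Icc (0:ℝ) 1, ∫ x₁ in Set.Icc (0:ℝ) 1,
      theta ((b : ℚ)/k) ((k : ℂ) * ((x₁ : ℂ) + τ * (x₂ : ℂ)) + u) ((k : ℂ) * τ) *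
      (starRingEnd ℂ) (theta ((a : ℚ)/k) ((k : ℂ) * ((x₁ : ℂ) + τ * (x₂ : ℂ)) + v) ((k : ℂ) * τ)) *
      Complex.exp (-(2 * (π : ℂ) * (t : ℂ) * ((k : ℂ) * (x₂ : ℂ) ^ 2 + 2 * (x₂ : ℂ) * (v₂ : ℂ)))) *
      Complex.exp (-(2 * (π : ℂ) * I * ((m : ℂ) * (x₁ : ℂ) + ((n : ℂ) - u + v) * (x₂ : ℂ))))) =
    (if (k : ℤ) ∣ (m - (b - a)) then
      ((1 / Real.sqrt (2 * t * k) : ℝ) : ℂ) *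
        Complex.exp (-(π : ℂ) / (2 * (t : ℂ) * (k : ℂ)) *
          ((Complex.normSq ((m : ℂ) * τ - (n : ℂ)) : ℂ)
            + 2 * (starRingEnd ℂ) ((m : ℂ) * τ - (n : ℂ)) * u
            - 2 * ((m : ℂ) * τ - (n : ℂ)) * (starRingEnd ℂ) v
            + (u - (starRingEnd ℂ) v) ^ 2)
          + (π : ℂ) * I * (n : ℂ) / (k : ℂ) * ((m : ℂ) + 2 * (a : ℂ)))
    else 0) := by
  have hk0 : (k:ℂ) ≠ 0 := by exact_mod_cast hk.ne'
  have hkp : (0:ℝ) < k := by exact_mod_cast hk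
  have ht0 : (t:ℂ) ≠ 0 := by exact_mod_cast htpos.ne'
  have htp' : 0 < τ.im := ht ▸ htpos
  have hτ : (starRingEnd ℂ) τ = τ - 2 * t * I := by
    apply Complex.ext <;> simp [ht]; ring
  have inner (x₂ : ℝ) := aux_prod τ htp' k hk a b m (k * (τ * x₂) + u) (k * (τ * x₂) + v)
    (Complex.exp (-(2 * (π : ℂ) * (t : ℂ) * ((k : ℂ) * (x₂ : ℂ) ^ 2 + 2 * (x₂ : ℂ) * (v₂ : ℂ)))) *
      Complex.exp (-(2 * (π : ℂ) * I * (((n : ℂ) - u + v) * (x₂ : ℂ)))))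
  have e : ∀ x₂ x₁ : ℝ, theta ((b : ℚ)/k) ((k : ℂ) * ((x₁ : ℂ) + τ * (x₂ : ℂ)) + u) ((k : ℂ) * τ) *
      (starRingEnd ℂ) (theta ((a : ℚ)/k) ((k : ℂ) * ((x₁ : ℂ) + τ * (x₂ : ℂ)) + v) ((k : ℂ) * τ)) *
      Complex.exp (-(2 * (π : ℂ) * (t : ℂ) * ((k : ℂ) * (x₂ : ℂ) ^ 2 + 2 * (x₂ : ℂ) * (v₂ : ℂ)))) *
      Complex.exp (-(2 * (π : ℂ) * I * ((m : ℂ) * (x₁ : ℂ) + ((n : ℂ) - u + v) * (x₂ : ℂ)))) =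
      theta ((b : ℚ)/k) ((k : ℂ) * (x₁ : ℂ) + (k * (τ * x₂) + u)) ((k : ℂ) * τ) *
      (starRingEnd ℂ) (theta ((a : ℚ)/k) ((k : ℂ) * (x₁ : ℂ) + (k * (τ * x₂) + v)) ((k : ℂ) * τ)) *
      (Complex.exp (-(2 * (π : ℂ) * (t : ℂ) * ((k : ℂ) * (x₂ : ℂ) ^ 2 + 2 * (x₂ : ℂ) * (v₂ : ℂ)))) *
      Complex.exp (-(2 * (π : ℂ) * I * (((n : ℂ) - u + v) * (x₂ : ℂ)))) *
       Complex.exp (-(2 * (π : ℂ) * I * ((m : ℂ) * (x₁ : ℂ))))) := by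
    intro x₂ x₁
    rw [mul_add (k:ℂ), add_assoc, add_assoc, mul_assoc (theta _ _ _ * _)]
    simp only [← Complex.exp_add]
    congr 2
    ring
  simp_rw [e, inner]
  split_ifs with hd
  swap
  · have : ∀ p : ℤ × ℤ, ¬ ((k:ℤ) * p.1 + b - (k * p.2 + a) - m) = 0 := by
      intro p hp
      exact hd ⟨p.1 - p.2, by linarith⟩
    simp [this]
  obtain ⟨l, hl⟩ := hd
  have hm : m = b - a + k * l := by linarith
  have hmC : (m:ℂ) = b - a + k * l := by exact_mod_cast congrArg (Int.cast : ℤ → ℂ) hm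
  have hbC : (b:ℂ) = m + a - k * l := by rw [hmC]; ring
  let C : ℂ := 2 * π * I * n * a / k + π * I * τ * m ^ 2 / k + 2 * π * I * m * u / k
  let G : ℝ → ℂ := fun y => Complex.exp (((-(2 * π * t * k) : ℝ):ℂ) * (y:ℂ) ^ 2
    + (2 * π * I * (m * τ - n + u - (starRingEnd ℂ) v)) * y + C)
  have hneg : (((-(2 * π * t * k) : ℝ):ℂ)).re < 0 := by
    rw [Complex.ofReal_re]
    have := Real.pi_pos
    have : 0 < 2 * π * t * k := by positivity
    linarith
  have hG : Integrable G := integrable_cexp_quadratic' hneg _ _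
  have key : ∀ x₂ : ℝ, (∑' p : ℤ × ℤ, if ((k:ℤ) * p.1 + b - (k * p.2 + a) - m) = 0 then 
      th (b/k) (k * (τ * x₂) + u) (k * τ) p.1 * (starRingEnd ℂ) (th (a/k) (k * (τ * x₂) + v) (k * τ) p.2) * (Complex.exp (-(2 * (π : ℂ) * (t : ℂ) * ((k : ℂ) * (x₂ : ℂ) ^ 2 + 2 * (x₂ : ℂ) * (v₂ : ℂ)))) *
      Complex.exp (-(2 * (π : ℂ) * I * (((n : ℂ) - u + v) * (x₂ : ℂ))))) else 0)
      = ∑' i : ℤ, G (x₂ + i + (a / k : ℝ)) := by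
    intro x₂
    have hinj : Function.Injective (fun i : ℤ => ((i + l, i) : ℤ × ℤ)) := by
      intro i j h
      exact congrArg Prod.snd h
    rw [← hinj.tsum_eq]
    · congr 1; ext i
      rw [if_pos (by simp only [hm]; ring)]
      simp only [th, G, ← Complex.exp_conj]
      rw [← Complex.exp_add, ← Complex.exp_add, ← Complex.exp_add]
      rw [Complex.exp_eq_exp_iff_exists_int]
      refine ⟨n * i, ?_⟩
      simp only [map_add, map_mul, map_pow, map_div₀, Complex.conj_I, Complex.conj_ofReal, map_natCast, map_intCast, map_ofNat, hv, hτ, C, hbC]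
      push_cast
      field_simp
      ring_nf
      simp only [Complex.I_sq, Complex.I_pow_three, Complex.I_pow_four]
      ring
    · intro p hp
      simp only [Function.mem_support, ne_eq, ite_eq_right_iff, Classical.not_imp] at hp
      have h1 : (k:ℤ) * (p.1 - p.2 - l) = 0 := by linarith [hp.1]
      have h2 : p.1 - p.2 - l = 0 := by
        rcases mul_eq_zero.1 h1 with h | h
        · omega
        · exact h
      exact ⟨p.2, Prod.ext (by simp only; omega) rfl⟩
  simp_rw [key]
  rw [aux_outer G hG, integral_cexp_quadratic hneg]
  congr 1
  · have : (π:ℂ) / -((-(2 * π * t * k) : ℝ):ℂ) = ((1 / (2 * t * k) : ℝ) : ℂ) := by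
      have := Real.pi_ne_zero
      push_cast
      field_simp
    rw [this, Real.sqrt_eq_rpow, one_div, one_div ((2 * t * k : ℝ) ^ _), ← Real.inv_rpow (by positivity)]
    rw [Complex.ofReal_cpow (by positivity)]
    simp
  · congr 1
    have hpi : (π:ℂ) ≠ 0 := by exact_mod_cast Real.pi_ne_zero
    rw [Complex.normSq_eq_conj_mul_self]
    simp only [map_add, map_sub, map_mul, Complex.conj_ofReal, map_intCast, hτ, C, hu, hv]
    push_cast
    field_simp
    ring_nf
    simp only [Complex.I_sq, Complex.I_pow_three, Complex.I_pow_four]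
    ring
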